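/- Theorem 4.1(n): If a locally finite partially ordered set satisfies Axioms D3⁻C, D3MF, and NCC, then it satisfies Axiom VT and Axiom FT. -/

import Mathlib

namespace DCompleteStmt

variable {α : Type*}

/-- A vee (d₃⁻-set) `{w; x, y}`: three distinct elements with `w ⋖ x` and `w ⋖ y`. -/
def IsVee [PartialOrder α] (w x y : α) : Prop :=
  x ≠ y ∧ w ⋖ x ∧ w ⋖ y

/-- A diamond `{w; x, y; z}`: four distinct elements with
`w ⋖ x`, `w ⋖ y`, `x ⋖ z`, `y ⋖ z`. -/
def IsDiamond [PartialOrder α] (w x y z : α) : Prop :=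
  x ≠ y ∧ w ⋖ x ∧ w ⋖ y ∧ x ⋖ z ∧ y ⋖ z

/-- A d₃-interval: an interval `[w,z]` that as a set equals a diamond `{w; x, y; z}`. -/
def IsD3Interval [PartialOrder α] (w x y z : α) : Prop :=
  IsDiamond w x y z ∧ Set.Icc w z = {w, x, y, z}

/-- Axiom VT: every vee has a top. -/
def AxVT (α : Type*) [PartialOrder α] : Prop :=
  ∀ w x y : α, IsVee w x y → ∃ z : α, x ⋖ z ∧ y ⋖ z

/-- Axiom NCC: there are no overlapping vees. -/
def AxNCC (α : Type*) [PartialOrder α] : Prop :=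
  ¬ ∃ w w' x y : α, w ≠ w' ∧ x ≠ y ∧ w ⋖ x ∧ w ⋖ y ∧ w' ⋖ x ∧ w' ⋖ y

/-- Property UT: every vee has exactly one top. -/
def PropUT (α : Type*) [PartialOrder α] : Prop :=
  ∀ w x y : α, IsVee w x y → ∃! z : α, x ⋖ z ∧ y ⋖ z

/-- Axiom D3⁻C: every vee has a completing element. -/
def AxD3C (α : Type*) [PartialOrder α] : Prop :=
  ∀ w x y : α, IsVee w x y → ∃ z : α, IsD3Interval w x y z

/-- Property NTC: no element is covered by three pairwise distinct elements. -/
def PropNTC (α : Type*) [PartialOrder α] : Prop :=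
  ¬ ∃ w x y u : α, x ≠ y ∧ x ≠ u ∧ y ≠ u ∧ w ⋖ x ∧ w ⋖ y ∧ w ⋖ u

/-- Property SS: every short interval has cardinality 3 or 4. -/
def PropSS (α : Type*) [PartialOrder α] : Prop :=
  ∀ w u z : α, w ⋖ u → u ⋖ z →
    (Set.Icc w z).ncard = 3 ∨ (Set.Icc w z).ncard = 4

/-- Axiom FT: the top of every diamond covers only the elbows of the diamond. -/
def AxFT (α : Type*) [PartialOrder α] : Prop :=
  ∀ w x y z : α, IsDiamond w x y z → ∀ u : α, u ⋖ z → u = x ∨ u = y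

/-- Axiom D3MF: the maximum of every d₃-interval covers only the elbows. -/
def AxD3MF (α : Type*) [PartialOrder α] : Prop :=
  ∀ w x y z : α, IsD3Interval w x y z → ∀ u : α, u ⋖ z → u = x ∨ u = y

/-- Axiom D3MD: two d₃-intervals with the same maximum element coincide as sets. -/
def AxD3MD (α : Type*) [PartialOrder α] : Prop :=
  ∀ w x y z w' x' y' : α, IsD3Interval w x y z → IsD3Interval w' x' y' z →
    ({w, x, y, z} : Set α) = {w', x', y', z}

/-- Axiom D3⁻CF: every vee has a completing element covering only the elbows. -/
def AxD3CF (α : Type*) [PartialOrder α] : Prop :=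
  ∀ w x y : α, IsVee w x y →
    ∃ z : α, IsD3Interval w x y z ∧ ∀ u : α, u ⋖ z → u = x ∨ u = y

/-- Property DAI: every diamond is an interval. -/
def PropDAI (α : Type*) [PartialOrder α] : Prop :=
  ∀ w x y z : α, IsDiamond w x y z → Set.Icc w z = {w, x, y, z}

/-- Property UC3: every vee has exactly one completing element. -/
def PropUC3 (α : Type*) [PartialOrder α] : Prop :=
  ∀ w x y : α, IsVee w x y → ∃! z : α, IsD3Interval w x y z

/-- Property UPUE: upward propagation of up edges. -/
def PropUPUE (α : Type*) [PartialOrder α] : Prop :=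
  ∀ w x y : α, w ≤ y → w ⋖ x → ¬ x ≤ y → ∃ z : α, y ⋖ z ∧ x ≤ z

/-- A covering chain `a = f 0 ⋖ f 1 ⋖ ⋯ ⋖ f n = b` of length `n`. -/
def IsCovChain [PartialOrder α] (f : ℕ → α) (n : ℕ) (a b : α) : Prop :=
  f 0 = a ∧ f n = b ∧ ∀ i < n, f i ⋖ f (i + 1)

/-- Connectedness via the Hasse diagram (covering graph). -/
def HasseConnected (α : Type*) [PartialOrder α] : Prop :=
  ∀ a b : α, Relation.ReflTransGen (fun u v : α => u ⋖ v ∨ v ⋖ u) a b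

/-- Property UM: a unique maximal element. -/
def PropUM (α : Type*) [PartialOrder α] : Prop :=
  ∃! z : α, IsMax z

/-- Property CLMEE: a unique maximal element, and all covering chains from any
element to it have equal length. -/
def PropCLMEE (α : Type*) [PartialOrder α] : Prop :=
  ∃ z : α, IsMax z ∧ (∀ z' : α, IsMax z' → z' = z) ∧
    ∀ (w : α) (n m : ℕ) (f g : ℕ → α),
      IsCovChain f n w z → IsCovChain g m w z → n = m

/-- The poset is ranked. -/
def IsRanked (α : Type*) [PartialOrder α] : Prop :=
  ∃ ρ : α → ℤ, ∀ x y : α, x ⋖ y → ρ y = ρ x + 1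

/-- Property CLE: whenever `x < y`, all covering chains from `x` to `y`
have equal length. -/
def PropCLE (α : Type*) [PartialOrder α] : Prop :=
  ∀ x y : α, x < y → ∀ (n m : ℕ) (f g : ℕ → α),
    IsCovChain f n x y → IsCovChain g m x y → n = m

section

variable [PartialOrder α] {w x y z z' : α}

theorem IsDiamond.isVee (h : IsDiamond w x y z) : IsVee w x y :=
  ⟨h.1, h.2.1, h.2.2.1⟩

theorem AxNCC.eq_of_covBy (hNCC : AxNCC α) (hxy : x ≠ y) (hxz : x ⋖ z) (hyz : y ⋖ z)
    (hxz' : x ⋖ z') (hyz' : y ⋖ z') : z = z' := by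
  by_contra hne
  exact hNCC ⟨x, y, z, z', hxy, hne, hxz, hxz', hyz, hyz'⟩

theorem AxD3C.axVT (hD3C : AxD3C α) : AxVT α := by
  intro w x y hvee
  obtain ⟨z, ⟨-, -, -, hxz, hyz⟩, -⟩ := hD3C w x y hvee
  exact ⟨z, hxz, hyz⟩

theorem AxD3C.propDAI (hD3C : AxD3C α) (hNCC : AxNCC α) : PropDAI α := by
  intro w x y z hdiamond
  have ⟨hxy, _, _, hxz, hyz⟩ := hdiamond
  obtain ⟨t, ⟨-, -, -, hxt, hyt⟩, hIcc⟩ := hD3C w x y hdiamond.isVee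
  obtain rfl : z = t := hNCC.eq_of_covBy hxy hxz hyz hxt hyt
  exact hIcc

theorem AxD3MF.axFT (hD3MF : AxD3MF α) (hDAI : PropDAI α) : AxFT α :=
  fun w x y z hdiamond ↦ hD3MF w x y z ⟨hdiamond, hDAI w x y z hdiamond⟩

theorem stmt_11_general (hD3C : AxD3C α) (hD3MF : AxD3MF α) (hNCC : AxNCC α) :
    AxVT α ∧ AxFT α :=
  ⟨hD3C.axVT, hD3MF.axFT (hD3C.propDAI hNCC)⟩

end

/-- Theorem 4.1(n): D3⁻C, D3MF, and NCC imply VT and FT. -/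
theorem stmt_11 {α : Type*} [PartialOrder α] (hLF : ∀ a b : α, (Set.Icc a b).Finite)
    (hD3C : AxD3C α) (hD3MF : AxD3MF α) (hNCC : AxNCC α) : AxVT α ∧ AxFT α :=
  stmt_11_general hD3C hD3MF hNCC

end DCompleteStmt
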